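/- (S-2-links pairs) Let n ≥ 3. Let l₁ = aₙ and l₂ = b₁ be the two link elements of M_{n,n}, let x ∈ {a₁,…,aₙ} ∖ {aₙ} and y ∈ {b₁,…,bₙ} ∖ {b₁}. If S = {l₁, l₂} and T = {x, y}, then (S, T) is a maximal ST-pair of M_{n,n}. -/

import Mathlib

/-- The underlying set of the lattice `M_{n,n}`: a bottom element `0`, a top
element `1`, and two levels `a₁, …, aₙ` and `b₁, …, bₙ`.  Here `a i` (for
`i : Fin n`) stands for `a_{i+1}` and `b j` for `b_{j+1}`, so the link elements
are `aₙ = a ⟨n-1, _⟩` and `b₁ = b ⟨0, _⟩`. -/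
inductive Mnn (n : ℕ) : Type where
  | bot : Mnn n
  | top : Mnn n
  | a : Fin n → Mnn n
  | b : Fin n → Mnn n
deriving DecidableEq

namespace Mnn

/-- The order of `M_{n,n}`: `0` is least, `1` is greatest, `aᵢ ≤ b₁` for every
`i`, `aₙ ≤ bⱼ` for every `j`, and there are no other comparabilities besides
those forced by reflexivity. -/
def le {n : ℕ} : Mnn n → Mnn n → Prop
  | .bot, _ => True
  | .top, .top => True
  | .top, .bot => False
  | .top, .a _ => False
  | .top, .b _ => False
  | .a _, .top => True
  | .a _, .bot => False
  | .a i, .a j => i = j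
  | .a i, .b j => (j : ℕ) = 0 ∨ (i : ℕ) = n - 1
  | .b _, .top => True
  | .b _, .bot => False
  | .b _, .a _ => False
  | .b i, .b j => i = j

/-- The join operation of `M_{n,n}`. -/
def sup {n : ℕ} : Mnn n → Mnn n → Mnn n
  | .bot, x => x
  | .top, _ => .top
  | .a i, .bot => .a i
  | .a _, .top => .top
  | .a i, .a j => if i = j then .a i else .b ⟨0, Nat.lt_of_le_of_lt (Nat.zero_le _) i.isLt⟩
  | .a i, .b j => if (j : ℕ) = 0 ∨ (i : ℕ) = n - 1 then .b j else .top
  | .b i, .bot => .b i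
  | .b _, .top => .top
  | .b i, .a j => if (i : ℕ) = 0 ∨ (j : ℕ) = n - 1 then .b i else .top
  | .b i, .b j => if i = j then .b i else .top

/-- The meet operation of `M_{n,n}`. -/
def inf {n : ℕ} : Mnn n → Mnn n → Mnn n
  | .bot, _ => .bot
  | .top, x => x
  | .a _, .bot => .bot
  | .a i, .top => .a i
  | .a i, .a j => if i = j then .a i else .bot
  | .a i, .b j => if (j : ℕ) = 0 ∨ (i : ℕ) = n - 1 then .a i else .bot
  | .b _, .bot => .bot
  | .b i, .top => .b i
  | .b i, .a j => if (i : ℕ) = 0 ∨ (j : ℕ) = n - 1 then .a j else .bot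
  | .b i, .b j => if i = j then .b i
      else .a ⟨n - 1, Nat.sub_lt (Nat.lt_of_le_of_lt (Nat.zero_le _) i.isLt) Nat.one_pos⟩

theorem le_refl' {n : ℕ} (x : Mnn n) : le x x := by cases x <;> simp [le]

theorem le_trans' {n : ℕ} (x y z : Mnn n) (hxy : le x y) (hyz : le y z) : le x z := by
  cases x <;> cases y <;> cases z <;> simp_all [le] <;> omega

theorem le_antisymm' {n : ℕ} (x y : Mnn n) (hxy : le x y) (hyx : le y x) : x = y := by
  cases x <;> cases y <;> simp_all [le]

theorem le_sup_left' {n : ℕ} (x y : Mnn n) : le x (sup x y) := by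
  cases x <;> cases y <;> dsimp only [sup] <;> (try split_ifs) <;> simp_all [le]

theorem le_sup_right' {n : ℕ} (x y : Mnn n) : le y (sup x y) := by
  cases x <;> cases y <;> dsimp only [sup] <;> (try split_ifs) <;> simp_all [le]

theorem sup_le' {n : ℕ} (x y z : Mnn n) (hxz : le x z) (hyz : le y z) :
    le (sup x y) z := by
  cases x <;> cases y <;> cases z <;> dsimp only [sup] <;> (try split_ifs) <;>
    simp_all [le, Fin.ext_iff] <;> omega

theorem inf_le_left' {n : ℕ} (x y : Mnn n) : le (inf x y) x := by
  cases x <;> cases y <;> dsimp only [inf] <;> (try split_ifs) <;> simp_all [le]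

theorem inf_le_right' {n : ℕ} (x y : Mnn n) : le (inf x y) y := by
  cases x <;> cases y <;> dsimp only [inf] <;> (try split_ifs) <;> simp_all [le]

theorem le_inf' {n : ℕ} (x y z : Mnn n) (hxy : le x y) (hxz : le x z) :
    le x (inf y z) := by
  cases x <;> cases y <;> cases z <;> dsimp only [inf] <;> (try split_ifs) <;>
    simp_all [le, Fin.ext_iff] <;> omega

/-- `M_{n,n}` is a lattice. -/
instance instLattice (n : ℕ) : Lattice (Mnn n) where
  le := le
  sup := sup
  inf := inf
  le_refl := le_refl'
  le_trans := le_trans'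
  le_antisymm := le_antisymm'
  le_sup_left := le_sup_left'
  le_sup_right := le_sup_right'
  sup_le := sup_le'
  inf_le_left := inf_le_left'
  inf_le_right := inf_le_right'
  le_inf := le_inf'

/-- `M_{n,n}* = M_{n,n} ∖ {0, 1}`, the set of non-identity elements. -/
def star (n : ℕ) : Set (Mnn n) := {x | x ≠ .bot ∧ x ≠ .top}

/-- The level `{a₁, …, aₙ}` of `M_{n,n}`. -/
def aLevel (n : ℕ) : Set (Mnn n) := Set.range Mnn.a

/-- The level `{b₁, …, bₙ}` of `M_{n,n}`. -/
def bLevel (n : ℕ) : Set (Mnn n) := Set.range Mnn.b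

/-- The link element `aₙ` of the level `{a₁, …, aₙ}`. -/
def aLink (n : ℕ) (h : 0 < n) : Mnn n := .a ⟨n - 1, Nat.sub_lt h Nat.one_pos⟩

/-- The link element `b₁` of the level `{b₁, …, bₙ}`. -/
def bLink (n : ℕ) (h : 0 < n) : Mnn n := .b ⟨0, h⟩

end Mnn

/-- `L` is `ST`-meet distributive. -/
def IsSTMeetDistrib {α : Type*} [Lattice α] (S T : Set α) : Prop :=
  ∀ s ∈ S, ∀ t₁ ∈ T, ∀ t₂ ∈ T, s ⊓ (t₁ ⊔ t₂) = (s ⊓ t₁) ⊔ (s ⊓ t₂)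

/-- `L` is `ST`-join distributive. -/
def IsSTJoinDistrib {α : Type*} [Lattice α] (S T : Set α) : Prop :=
  ∀ s ∈ S, ∀ t₁ ∈ T, ∀ t₂ ∈ T, s ⊔ (t₁ ⊓ t₂) = (s ⊔ t₁) ⊓ (s ⊔ t₂)

/-- `L` is `ST`-distributive. -/
def IsSTDistrib {α : Type*} [Lattice α] (S T : Set α) : Prop :=
  IsSTMeetDistrib S T ∧ IsSTJoinDistrib S T

/-- `(S, T)` is a maximal `ST`-pair of `M_{n,n}` (subject to the conditions of
the search problem: `S, T ⊆ M_{n,n}*`, `S ∩ T = ∅`, `S ≠ ∅`, `T ≠ ∅`). -/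
def MaximalSTPair (n : ℕ) (S T : Set (Mnn n)) : Prop :=
  S ⊆ Mnn.star n ∧ T ⊆ Mnn.star n ∧ S ∩ T = ∅ ∧ S.Nonempty ∧ T.Nonempty ∧
  IsSTDistrib S T ∧
  (¬ ∃ S' : Set (Mnn n), S ⊂ S' ∧ S' ⊆ Mnn.star n ∧ S' ∩ T = ∅ ∧ IsSTDistrib S' T) ∧
  (¬ ∃ T' : Set (Mnn n), T ⊂ T' ∧ T' ⊆ Mnn.star n ∧ S ∩ T' = ∅ ∧ IsSTDistrib S T')

/-!
A non-link `x` of the `a`-level and a non-link `y` of the `b`-level are complements, and an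
element distributes over a complementary pair exactly when it is both the join of its meets with
`x` and `y` and the meet of its joins with them. The links satisfy this, since `aₙ ⊔ x = b₁` and
`b₁ ⊓ y = aₙ`. Another non-link `aₖ` does not: its meets with `x` and `y` are `0`. Nor can `aₖ`
be added to `T`: the link `aₙ` is disjoint from `x` and `aₖ` but lies below their join `b₁`.
The same arguments, dualized, exclude the non-links `bₖ`.
-/

section Lattice

variable {α : Type*} [Lattice α] {S S' T T' : Set α} {s t₁ t₂ x y : α}

theorem IsSTDistrib.mono (h : IsSTDistrib S T) (hS : S' ⊆ S) (hT : T' ⊆ T) :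
    IsSTDistrib S' T' :=
  ⟨fun s hs t₁ h₁ t₂ h₂ ↦ h.1 s (hS hs) t₁ (hT h₁) t₂ (hT h₂),
    fun s hs t₁ h₁ t₂ h₂ ↦ h.2 s (hS hs) t₁ (hT h₁) t₂ (hT h₂)⟩

theorem IsSTMeetDistrib.disjoint_sup_right [OrderBot α] (h : IsSTMeetDistrib S T) (hs : s ∈ S)
    (ht₁ : t₁ ∈ T) (ht₂ : t₂ ∈ T) (h₁ : Disjoint s t₁) (h₂ : Disjoint s t₂) :
    Disjoint s (t₁ ⊔ t₂) := by
  rw [disjoint_iff, h s hs t₁ ht₁ t₂ ht₂, h₁.eq_bot, h₂.eq_bot, sup_idem]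

theorem IsSTJoinDistrib.codisjoint_inf_right [OrderTop α] (h : IsSTJoinDistrib S T) (hs : s ∈ S)
    (ht₁ : t₁ ∈ T) (ht₂ : t₂ ∈ T) (h₁ : Codisjoint s t₁) (h₂ : Codisjoint s t₂) :
    Codisjoint s (t₁ ⊓ t₂) := by
  rw [codisjoint_iff, h s hs t₁ ht₁ t₂ ht₂, h₁.eq_top, h₂.eq_top, inf_idem]

theorem isSTMeetDistrib_pair_right_iff :
    IsSTMeetDistrib S {x, y} ↔ ∀ s ∈ S, s ⊓ (x ⊔ y) = (s ⊓ x) ⊔ (s ⊓ y) := by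
  refine ⟨fun h s hs ↦ h s hs x (.inl rfl) y (.inr rfl), fun h s hs ↦ ?_⟩
  rintro _ (rfl | rfl) _ (rfl | rfl)
  · rw [sup_idem, sup_idem]
  · exact h s hs
  · rw [sup_comm, h s hs, sup_comm]
  · rw [sup_idem, sup_idem]

theorem isSTJoinDistrib_pair_right_iff :
    IsSTJoinDistrib S {x, y} ↔ ∀ s ∈ S, s ⊔ (x ⊓ y) = (s ⊔ x) ⊓ (s ⊔ y) :=
  isSTMeetDistrib_pair_right_iff (α := αᵒᵈ)

theorem isSTDistrib_pair_right_iff_of_isCompl [BoundedOrder α] (hxy : IsCompl x y) :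
    IsSTDistrib S {x, y} ↔ ∀ s ∈ S, (s ⊓ x) ⊔ (s ⊓ y) = s ∧ (s ⊔ x) ⊓ (s ⊔ y) = s := by
  simp only [IsSTDistrib, isSTMeetDistrib_pair_right_iff, isSTJoinDistrib_pair_right_iff,
    hxy.sup_eq_top, hxy.inf_eq_bot, inf_top_eq, sup_bot_eq, ← forall₂_and, eq_comm]

theorem isSTDistrib_pair_pair_of_isCompl [BoundedOrder α] {l₁ l₂ : α} (hxy : IsCompl x y)
    (hsup : l₁ ⊔ x = l₂) (hinf : l₂ ⊓ y = l₁) : IsSTDistrib {l₁, l₂} {x, y} := by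
  have hl₁y : l₁ ≤ y := hinf ▸ inf_le_right
  have hxl₂ : x ≤ l₂ := hsup ▸ le_sup_right
  rw [isSTDistrib_pair_right_iff_of_isCompl hxy]
  rintro _ (rfl | rfl)
  · exact ⟨by rw [inf_eq_left.2 hl₁y, sup_eq_right.2 inf_le_left],
      by rw [hsup, sup_eq_right.2 hl₁y, hinf]⟩
  · exact ⟨by rw [inf_eq_right.2 hxl₂, hinf, sup_comm, hsup],
      by rw [sup_eq_left.2 hxl₂, inf_eq_left.2 le_sup_left]⟩

end Lattice

theorem maximalSTPair_of_forall_mem {n : ℕ} {S T : Set (Mnn n)} (hS : S ⊆ Mnn.star n)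
    (hT : T ⊆ Mnn.star n) (hST : Disjoint S T) (hS₀ : S.Nonempty) (hT₀ : T.Nonempty)
    (hdistrib : IsSTDistrib S T)
    (hmaxS : ∀ z ∈ Mnn.star n, z ∉ T → IsSTDistrib {z} T → z ∈ S)
    (hmaxT : ∀ z ∈ Mnn.star n, z ∉ S → IsSTDistrib S (insert z T) → z ∈ T) :
    MaximalSTPair n S T := by
  refine ⟨hS, hT, hST.inter_eq, hS₀, hT₀, hdistrib, ?_, ?_⟩
  · rintro ⟨S', hSS', hS', hdisj, h⟩
    refine hSS'.not_subset fun z hz ↦ hmaxS z (hS' hz) ?_ ?_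
    · exact Set.disjoint_left.1 (Set.disjoint_iff_inter_eq_empty.2 hdisj) hz
    · exact h.mono (Set.singleton_subset_iff.2 hz) subset_rfl
  · rintro ⟨T', hTT', hT', hdisj, h⟩
    refine hTT'.not_subset fun z hz ↦ hmaxT z (hT' hz) ?_ ?_
    · exact Set.disjoint_right.1 (Set.disjoint_iff_inter_eq_empty.2 hdisj) hz
    · exact h.mono subset_rfl (Set.insert_subset hz hTT'.subset)

namespace Mnn

variable {n : ℕ} {h : 0 < n} {i j k : Fin n}

/-- Identifies the constructors `bot` and `top` with `⊥` and `⊤`, so that `Disjoint`, `Codisjoint`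
and `IsCompl` apply to `M_{n,n}`. -/
instance instBoundedOrder : BoundedOrder (Mnn n) where
  top := top
  le_top x := by cases x <;> trivial
  bot := bot
  bot_le _ := trivial

theorem a_mem_star : a i ∈ star n := ⟨nofun, nofun⟩

theorem b_mem_star : b j ∈ star n := ⟨nofun, nofun⟩

theorem a_le_b_iff : a i ≤ b j ↔ a i = aLink n h ∨ b j = bLink n h := by
  simp only [aLink, bLink, a.injEq, b.injEq, Fin.ext_iff]
  exact or_comm

theorem isCompl_a_b_of_not_le (hij : ¬ a i ≤ b j) : IsCompl (a i) (b j) :=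
  ⟨disjoint_iff.2 (if_neg hij), codisjoint_iff.2 (if_neg hij)⟩

theorem isCompl_a_b_of_ne_link (hi : a i ≠ aLink n h) (hj : b j ≠ bLink n h) :
    IsCompl (a i) (b j) :=
  isCompl_a_b_of_not_le fun hij ↦ (a_le_b_iff.1 hij).elim hi hj

theorem disjoint_a_a (hik : a i ≠ a k) : Disjoint (a i) (a k) :=
  disjoint_iff.2 (if_neg (ne_of_apply_ne a hik))

theorem codisjoint_b_b (hjk : b j ≠ b k) : Codisjoint (b j) (b k) :=
  codisjoint_iff.2 (if_neg (ne_of_apply_ne b hjk))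

theorem a_sup_a_of_ne (hik : a i ≠ a k) : a i ⊔ a k = bLink n h :=
  if_neg (ne_of_apply_ne a hik)

theorem b_inf_b_of_ne (hjk : b j ≠ b k) : b j ⊓ b k = aLink n h :=
  if_neg (ne_of_apply_ne b hjk)

theorem aLink_le_bLink : aLink n h ≤ bLink n h := (a_le_b_iff (h := h)).2 (.inl rfl)

theorem disjoint_links_nonlinks (hi : a i ≠ aLink n h) (hj : b j ≠ bLink n h) :
    Disjoint ({aLink n h, bLink n h} : Set (Mnn n)) {a i, b j} := by
  rw [Set.disjoint_left]
  rintro _ (rfl | rfl) (h' | h')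
  exacts [hi h'.symm, (nomatch h'), (nomatch h'), hj h'.symm]

theorem isSTDistrib_links_nonlinks (hi : a i ≠ aLink n h) (hj : b j ≠ bLink n h) :
    IsSTDistrib {aLink n h, bLink n h} {a i, b j} :=
  isSTDistrib_pair_pair_of_isCompl (isCompl_a_b_of_ne_link hi hj) (a_sup_a_of_ne hi.symm)
    (b_inf_b_of_ne hj.symm)

theorem mem_links_of_isSTDistrib_nonlinks (hi : a i ≠ aLink n h) (hj : b j ≠ bLink n h)
    {z : Mnn n} (hz : z ∈ star n) (hzT : z ∉ ({a i, b j} : Set (Mnn n)))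
    (hdistrib : IsSTDistrib {z} {a i, b j}) : z ∈ ({aLink n h, bLink n h} : Set (Mnn n)) := by
  obtain ⟨hmeet, hjoin⟩ :=
    (isSTDistrib_pair_right_iff_of_isCompl (isCompl_a_b_of_ne_link hi hj)).1 hdistrib z rfl
  obtain ⟨hzi, hzj⟩ : z ≠ a i ∧ z ≠ b j := by simpa using hzT
  rcases z with _ | _ | k | k
  · exact absurd rfl hz.1
  · exact absurd rfl hz.2
  · refine .inl (of_not_not fun hk ↦ hz.1 ?_)
    rw [← hmeet, (disjoint_a_a hzi).eq_bot, (isCompl_a_b_of_ne_link hk hj).inf_eq_bot, sup_idem]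
    rfl
  · refine .inr (of_not_not fun hk ↦ hz.2 ?_)
    rw [← hjoin, (isCompl_a_b_of_ne_link hi hk).symm.sup_eq_top, (codisjoint_b_b hzj).eq_top,
      inf_idem]
    rfl

theorem not_isSTMeetDistrib_of_aLink_mem {S T : Set (Mnn n)} (hS : aLink n h ∈ S) (hi : a i ∈ T)
    (hk : a k ∈ T) (hi' : a i ≠ aLink n h) (hk' : a k ≠ aLink n h) (hik : a i ≠ a k) :
    ¬ IsSTMeetDistrib S T := by
  intro hdistrib
  have hdisj : Disjoint (aLink n h) (a i ⊔ a k) :=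
    hdistrib.disjoint_sup_right hS hi hk (disjoint_a_a hi'.symm) (disjoint_a_a hk'.symm)
  rw [a_sup_a_of_ne (h := h) hik] at hdisj
  exact a_mem_star.1 (hdisj.eq_bot_of_le aLink_le_bLink)

theorem not_isSTJoinDistrib_of_bLink_mem {S T : Set (Mnn n)} (hS : bLink n h ∈ S) (hj : b j ∈ T)
    (hk : b k ∈ T) (hj' : b j ≠ bLink n h) (hk' : b k ≠ bLink n h) (hjk : b j ≠ b k) :
    ¬ IsSTJoinDistrib S T := by
  intro hdistrib
  have hcodisj : Codisjoint (bLink n h) (b j ⊓ b k) :=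
    hdistrib.codisjoint_inf_right hS hj hk (codisjoint_b_b hj'.symm) (codisjoint_b_b hk'.symm)
  rw [b_inf_b_of_ne (h := h) hjk] at hcodisj
  exact b_mem_star.2 (hcodisj.eq_top_of_le aLink_le_bLink)

theorem mem_nonlinks_of_isSTDistrib_links (hi : a i ≠ aLink n h) (hj : b j ≠ bLink n h)
    {z : Mnn n} (hz : z ∈ star n) (hzS : z ∉ ({aLink n h, bLink n h} : Set (Mnn n)))
    (hdistrib : IsSTDistrib {aLink n h, bLink n h} {z, a i, b j}) :
    z ∈ ({a i, b j} : Set (Mnn n)) := by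
  obtain ⟨hza, hzb⟩ : z ≠ aLink n h ∧ z ≠ bLink n h := by simpa using hzS
  rcases z with _ | _ | k | k
  · exact absurd rfl hz.1
  · exact absurd rfl hz.2
  · exact .inl (of_not_not fun hki ↦ not_isSTMeetDistrib_of_aLink_mem (by simp) (by simp)
      (by simp) hza hi hki hdistrib.1)
  · exact .inr (of_not_not fun hkj ↦ not_isSTJoinDistrib_of_bLink_mem (by simp) (by simp)
      (by simp) hzb hj hkj hdistrib.2)

end Mnn

theorem s_2links_maximal_general {n : ℕ} (h : 0 < n) {i j : Fin n}
    (hi : Mnn.a i ≠ Mnn.aLink n h) (hj : Mnn.b j ≠ Mnn.bLink n h) :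
    MaximalSTPair n {Mnn.aLink n h, Mnn.bLink n h} {Mnn.a i, Mnn.b j} :=
  maximalSTPair_of_forall_mem
    (Set.pair_subset Mnn.a_mem_star Mnn.b_mem_star)
    (Set.pair_subset Mnn.a_mem_star Mnn.b_mem_star)
    (Mnn.disjoint_links_nonlinks hi hj) (Set.insert_nonempty _ _) (Set.insert_nonempty _ _)
    (Mnn.isSTDistrib_links_nonlinks hi hj)
    (fun _ ↦ Mnn.mem_links_of_isSTDistrib_nonlinks hi hj)
    (fun _ ↦ Mnn.mem_nonlinks_of_isSTDistrib_links hi hj)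

/-- S-2-links pairs are maximal `ST`-pairs of `M_{n,n}`: `S = {aₙ, b₁}` (the
two links) and `T = {x, y}` with `x` a non-link element of the `a`-level and
`y` a non-link element of the `b`-level. -/
theorem s_2links_maximal (n : ℕ) (hn : 3 ≤ n) (i j : Fin n)
    (hi : Mnn.a i ≠ Mnn.aLink n (by omega))
    (hj : Mnn.b j ≠ Mnn.bLink n (by omega)) :
    MaximalSTPair n {Mnn.aLink n (by omega), Mnn.bLink n (by omega)}
      {Mnn.a i, Mnn.b j} :=
  s_2links_maximal_general _ hi hj
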